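/- arXiv:math/0602577 — 7 statements merged into one kernel-verified Lean document; each statement's English description precedes it below -/
import Mathlib

section
/- Let μ ∈ (0,1), q₁, A₂, n, W₁ ∈ ℝ, and let x, y : ℝ → ℝ be twice differentiable functions such that for every t, r₁(t) := √((x(t)+μ)² + y(t)²) > 0 and r₂(t) := √((x(t)+μ−1)² + y(t)²) > 0, and such that the equations of motion hold: ẍ − 2nẏ = n²x − (1−μ)q₁(x+μ)/r₁³ − μ(x+μ−1)/r₂³ − (3/2)μA₂(x+μ−1)/r₂⁵ + F_x and ÿ + 2nẋ = n²y − (1−μ)q₁y/r₁³ − μy/r₂³ − (3/2)μA₂y/r₂⁵ + F_y, where F_x = −(W₁/r₁²){(x+μ)[(x+μ)ẋ + yẏ]/r₁² + ẋ − ny} and F_y = −(W₁/r₁²){y[(x+μ)ẋ + yẏ]/r₁² + ẏ + n(x+μ)}. Then the Jacobi function C(t) := 2U₁(x(t),y(t)) − ẋ(t)² − ẏ(t)², with U₁(x,y) = (n²/2)(x² + y²) + (1−μ)q₁/r₁ + μ/r₂ + μA₂/(2r₂³), is differentiable and satisfies C′(t) = −2(ẋ(t)F_x(t) + ẏ(t)F_y(t))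 for every t. -/
/-!
Differentiating `C = 2 U₁ - ẋ² - ẏ²` along the motion gives `2 (∇U₁ · v) - 2 (v · a)`. The equations
of motion say `a = ∇U₁ + (2nẏ, -2nẋ) + F`; the Coriolis term is orthogonal to `v`, so only
`-2 (v · F)` survives. The gradient terms are computed from `ṙ = (u u̇ + y ẏ) / r` for the
distance `r` to a primary (`hasDerivAt_dist`).
-/

/-- Rate of change of the distance `r` from the origin to a moving point `(u, v)`. -/
lemma hasDerivAt_dist {u v r : ℝ → ℝ} {u' v' t : ℝ}
    (hu : HasDerivAt u u' t) (hv : HasDerivAt v v' t)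
    (hr : ∀ s, r s = Real.sqrt (u s ^ 2 + v s ^ 2)) (hpos : 0 < r t) :
    HasDerivAt r ((u t * u' + v t * v') / r t) t := by
  have hne : u t ^ 2 + v t ^ 2 ≠ 0 := by
    intro h
    rw [hr, h, Real.sqrt_zero] at hpos
    exact lt_irrefl _ hpos
  have h := ((hu.pow 2).add (hv.pow 2)).sqrt hne
  have hfun : r = fun s => Real.sqrt ((u ^ 2 + v ^ 2) s) := by
    funext s
    simp [hr s]
  rw [hfun]
  convert h using 1
  simp only [Pi.add_apply, Pi.pow_apply]
  have : Real.sqrt (u t ^ 2 + v t ^ 2) ≠ 0 := by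
    rw [← hr]
    exact hpos.ne'
  field_simp
  ring

/-- The Jacobi function C(t) = 2U₁(x(t),y(t)) − ẋ(t)² − ẏ(t)² of the generalized
photogravitational restricted three-body problem with Poynting–Robertson drag
satisfies C′(t) = −2(ẋ F_x + ẏ F_y). -/
theorem stmt_3 (μ q₁ A₂ n W₁ : ℝ) (hμ : μ ∈ Set.Ioo (0 : ℝ) 1)
    (x y x' y' x'' y'' : ℝ → ℝ)
    (hx : ∀ t, HasDerivAt x (x' t) t) (hx' : ∀ t, HasDerivAt x' (x'' t) t)
    (hy : ∀ t, HasDerivAt y (y' t) t) (hy' : ∀ t, HasDerivAt y' (y'' t) t)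
    (r₁ r₂ Fx Fy C : ℝ → ℝ)
    (hr₁ : ∀ t, r₁ t = Real.sqrt ((x t + μ) ^ 2 + (y t) ^ 2))
    (hr₂ : ∀ t, r₂ t = Real.sqrt ((x t + μ - 1) ^ 2 + (y t) ^ 2))
    (hr₁pos : ∀ t, r₁ t > 0) (hr₂pos : ∀ t, r₂ t > 0)
    (hFx : ∀ t, Fx t = -(W₁ / (r₁ t) ^ 2) *
      ((x t + μ) * ((x t + μ) * x' t + y t * y' t) / (r₁ t) ^ 2 + x' t - n * y t))
    (hFy : ∀ t, Fy t = -(W₁ / (r₁ t) ^ 2) *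
      (y t * ((x t + μ) * x' t + y t * y' t) / (r₁ t) ^ 2 + y' t + n * (x t + μ)))
    (heqx : ∀ t, x'' t - 2 * n * y' t =
      n ^ 2 * x t - (1 - μ) * q₁ * (x t + μ) / (r₁ t) ^ 3
        - μ * (x t + μ - 1) / (r₂ t) ^ 3
        - 3 / 2 * μ * A₂ * (x t + μ - 1) / (r₂ t) ^ 5 + Fx t)
    (heqy : ∀ t, y'' t + 2 * n * x' t =
      n ^ 2 * y t - (1 - μ) * q₁ * y t / (r₁ t) ^ 3
        - μ * y t / (r₂ t) ^ 3
        - 3 / 2 * μ * A₂ * y t / (r₂ t) ^ 5 + Fy t)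
    (hC : ∀ t, C t =
      2 * (n ^ 2 / 2 * ((x t) ^ 2 + (y t) ^ 2) + (1 - μ) * q₁ / r₁ t
            + μ / r₂ t + μ * A₂ / (2 * (r₂ t) ^ 3))
        - (x' t) ^ 2 - (y' t) ^ 2) :
    ∀ t, HasDerivAt C (-2 * (x' t * Fx t + y' t * Fy t)) t := by
  intro t
  have h₁ := hasDerivAt_dist ((hx t).add_const μ) (hy t) hr₁ (hr₁pos t)
  have h₂ := hasDerivAt_dist (((hx t).add_const μ).sub_const 1) (hy t) hr₂ (hr₂pos t)
  have n₁ : r₁ t ≠ 0 := (hr₁pos t).ne'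
  have n₂ : r₂ t ≠ 0 := (hr₂pos t).ne'
  have hU := (((((hx t).pow 2).add ((hy t).pow 2)).const_mul (n ^ 2 / 2)).add
    ((h₁.inv n₁).const_mul ((1 - μ) * q₁))).add ((h₂.inv n₂).const_mul μ) |>.add
    (((h₂.pow 3).inv (pow_ne_zero 3 n₂)).const_mul (μ * A₂ / 2))
  have h := ((hU.const_mul 2).sub ((hx' t).pow 2)).sub ((hy' t).pow 2)
  have ex : x'' t = _ := eq_add_of_sub_eq (heqx t)
  have ey : y'' t = _ := eq_sub_of_add_eq (heqy t)
  refine (h.congr_deriv ?_).congr_of_eventuallyEq (Filter.Eventually.of_forall fun s => ?_)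
  · rw [ex, ey]
    simp only [Pi.pow_apply]
    field_simp
    ring
  · simp only [hC s, Pi.add_apply, Pi.sub_apply, Pi.pow_apply, Pi.inv_apply]
    ring
end

section
/- Let μ, q₁, A₂, n, W₁, x, y ∈ ℝ with r₁ := √((x+μ)² + y²) > 0 and r₂ := √((x+μ−1)² + y²) > 0. If (x,y) satisfies the equilibrium equations (E1) n²x − (1−μ)q₁(x+μ)/r₁³ − μ(x+μ−1)/r₂³ − (3/2)μA₂(x+μ−1)/r₂⁵ + nW₁y/r₁² = 0 and (E2) n²y − (1−μ)q₁y/r₁³ − μy/r₂³ − (3/2)μA₂y/r₂⁵ − nW₁(x+μ)/r₁² = 0, then {n² − (1/r₂³)(1 + 3A₂/(2r₂²))}·μ·y = n·W₁. -/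
/-- From the equilibrium equations of the generalized photogravitational restricted
three-body problem with Poynting–Robertson drag, one deduces
{n² − (1/r₂³)(1 + 3A₂/(2r₂²))}·μ·y = n·W₁. -/
theorem stmt_5 (μ q₁ A₂ n W₁ x y : ℝ)
    (r₁ r₂ : ℝ)
    (hr₁def : r₁ = Real.sqrt ((x + μ) ^ 2 + y ^ 2))
    (hr₂def : r₂ = Real.sqrt ((x + μ - 1) ^ 2 + y ^ 2))
    (hr₁ : r₁ > 0) (hr₂ : r₂ > 0)
    (hE1 : n ^ 2 * x - (1 - μ) * q₁ * (x + μ) / r₁ ^ 3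
      - μ * (x + μ - 1) / r₂ ^ 3
      - 3 / 2 * μ * A₂ * (x + μ - 1) / r₂ ^ 5
      + n * W₁ * y / r₁ ^ 2 = 0)
    (hE2 : n ^ 2 * y - (1 - μ) * q₁ * y / r₁ ^ 3
      - μ * y / r₂ ^ 3
      - 3 / 2 * μ * A₂ * y / r₂ ^ 5
      - n * W₁ * (x + μ) / r₁ ^ 2 = 0) :
    (n ^ 2 - 1 / r₂ ^ 3 * (1 + 3 * A₂ / (2 * r₂ ^ 2))) * μ * y = n * W₁ := by
  have hsq : r₁ ^ 2 = (x + μ) ^ 2 + y ^ 2 := by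
    rw [hr₁def, Real.sq_sqrt (by positivity)]
  have hone : ((x + μ) ^ 2 + y ^ 2) * (r₁ ^ 2)⁻¹ = 1 := by
    rw [← hsq]
    exact mul_inv_cancel₀ (by positivity)
  have hexp : (n ^ 2 - 1 / r₂ ^ 3 * (1 + 3 * A₂ / (2 * r₂ ^ 2))) * μ * y
      = n ^ 2 * μ * y - μ * y * (r₂ ^ 3)⁻¹ - 3 / 2 * μ * A₂ * y * (r₂ ^ 5)⁻¹ := by
    field_simp
    ring
  rw [hexp]
  simp only [div_eq_mul_inv _ (r₁ ^ _), div_eq_mul_inv _ (r₂ ^ _)] at hE1 hE2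
  -- The torque about the first primary, `(x + μ) * E2 - y * E1`: its central force drops out,
  -- and the drag terms combine to `-(n * W₁)` because `r₁ ^ 2 = (x + μ) ^ 2 + y ^ 2`.
  linear_combination (x + μ) * hE2 - y * hE1 + n * W₁ * hone
end

section
/- Let μ, q₁, A₂, x, y ∈ ℝ and n, W₁ ∈ ℝ with n > 0, W₁ ≠ 0, n² = 1 + (3/2)A₂, r₁ := √((x+μ)² + y²) > 0 and r₂ := √((x+μ−1)² + y²) > 0. If (x,y) satisfies the equilibrium equations (E1) n²x − (1−μ)q₁(x+μ)/r₁³ − μ(x+μ−1)/r₂³ − (3/2)μA₂(x+μ−1)/r₂⁵ + nW₁y/r₁² = 0 and (E2) n²y − (1−μ)q₁y/r₁³ − μy/r₂³ − (3/2)μA₂y/r₂⁵ − nW₁(x+μ)/r₁² = 0, then r₂ ≠ 1; that is, nonzero Poynting–Robertson drag displaces the equilibrium points off the unit circle about the smaller primary. -/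
/-- Nonzero Poynting–Robertson drag displaces the equilibrium points off the unit
circle about the smaller primary: at an equilibrium point with W₁ ≠ 0, r₂ ≠ 1. -/
theorem stmt_6 (μ q₁ A₂ x y n W₁ : ℝ) (hn : n > 0) (hW₁ : W₁ ≠ 0)
    (hn2 : n ^ 2 = 1 + 3 / 2 * A₂)
    (r₁ r₂ : ℝ)
    (hr₁def : r₁ = Real.sqrt ((x + μ) ^ 2 + y ^ 2))
    (hr₂def : r₂ = Real.sqrt ((x + μ - 1) ^ 2 + y ^ 2))
    (hr₁ : r₁ > 0) (hr₂ : r₂ > 0)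
    (hE1 : n ^ 2 * x - (1 - μ) * q₁ * (x + μ) / r₁ ^ 3
      - μ * (x + μ - 1) / r₂ ^ 3
      - 3 / 2 * μ * A₂ * (x + μ - 1) / r₂ ^ 5
      + n * W₁ * y / r₁ ^ 2 = 0)
    (hE2 : n ^ 2 * y - (1 - μ) * q₁ * y / r₁ ^ 3
      - μ * y / r₂ ^ 3
      - 3 / 2 * μ * A₂ * y / r₂ ^ 5
      - n * W₁ * (x + μ) / r₁ ^ 2 = 0) :
    r₂ ≠ 1 := by
  rintro rfl
  have hsq : (x + μ) ^ 2 + y ^ 2 = r₁ ^ 2 := by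
    rw [hr₁def, Real.sq_sqrt (by positivity)]
  -- At `r₂ = 1` the relation `n² = 1 + 3A₂/2` turns the centrifugal and second-primary terms
  -- into `n²(1-μ)(x+μ, y)`, which is radial about the first primary, like its own attraction.
  -- The cross product with `(x+μ, y)` thus leaves only the drag term, which equals `n W₁`.
  have hcross : n * W₁ * ((x + μ) ^ 2 + y ^ 2) / r₁ ^ 2 = 0 := by
    linear_combination y * hE1 - (x + μ) * hE2 + μ * y * hn2
  rw [hsq, mul_div_cancel_right₀ _ (by positivity)] at hcross
  exact mul_ne_zero hn.ne' hW₁ hcross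
end

section
/- Let μ ∈ (0,1), A₂ ∈ ℝ, n > 0 with n² = 1 + (3/2)A₂, q₁ > 0, and set δ̄ = (q₁/n²)^{1/3}. Assume 0 < δ̄ < 2, W₁ = 0, and let x = δ̄²/2 − μ and y ∈ ℝ be any number with y² = δ̄² − δ̄⁴/4. Then r₁ := √((x+μ)² + y²) = δ̄, r₂ := √((x+μ−1)² + y²) = 1, and (x,y) satisfies both equilibrium equations (E1) n²x − (1−μ)q₁(x+μ)/r₁³ − μ(x+μ−1)/r₂³ − (3/2)μA₂(x+μ−1)/r₂⁵ = 0 and (E2) n²y − (1−μ)q₁y/r₁³ − μy/r₂³ − (3/2)μA₂y/r₂⁵ = 0. In particular, in the drag-free generalized photogravitational problem with an oblate smaller primary, the triangular equilibrium points lie at distance (q₁/n²)^{1/3} from the radiating primary and at unit distance from the oblate primary. -/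
/-!
The relation `y² = δ̄² - δ̄⁴/4` with `x + μ = δ̄²/2` says exactly that the point is at distance `δ̄`
from the first primary and `1` from the second. Since `δ̄³ = q₁ / n²`, the first primary's
attraction is `(1 - μ) n²` times the displacement from it; since `n² = 1 + (3/2) A₂` and `r₂ = 1`,
the second's is `μ n²` times the displacement from it. The centre of mass being the origin, these
sum to `n² (x, y)`, which balances the centrifugal term.
-/

/-- In the drag-free generalized photogravitational problem with an oblate smaller
primary, the triangular equilibrium points lie at distance δ̄ = (q₁/n²)^{1/3} from the
radiating primary and at unit distance from the oblate primary, and they satisfy both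
equilibrium equations. -/
theorem stmt_7 (μ A₂ n q₁ : ℝ) (hμ : μ ∈ Set.Ioo (0 : ℝ) 1)
    (hn : n > 0) (hn2 : n ^ 2 = 1 + 3 / 2 * A₂) (hq₁ : q₁ > 0)
    (W₁ : ℝ) (hW₁ : W₁ = 0)
    (δbar : ℝ) (hδbar : δbar = (q₁ / n ^ 2) ^ ((1 : ℝ) / 3))
    (hδ0 : 0 < δbar) (hδ2 : δbar < 2)
    (x y : ℝ) (hx : x = δbar ^ 2 / 2 - μ) (hy : y ^ 2 = δbar ^ 2 - δbar ^ 4 / 4) :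
    Real.sqrt ((x + μ) ^ 2 + y ^ 2) = δbar ∧
    Real.sqrt ((x + μ - 1) ^ 2 + y ^ 2) = 1 ∧
    n ^ 2 * x
      - (1 - μ) * q₁ * (x + μ) / (Real.sqrt ((x + μ) ^ 2 + y ^ 2)) ^ 3
      - μ * (x + μ - 1) / (Real.sqrt ((x + μ - 1) ^ 2 + y ^ 2)) ^ 3
      - 3 / 2 * μ * A₂ * (x + μ - 1) / (Real.sqrt ((x + μ - 1) ^ 2 + y ^ 2)) ^ 5 = 0 ∧
    n ^ 2 * y
      - (1 - μ) * q₁ * y / (Real.sqrt ((x + μ) ^ 2 + y ^ 2)) ^ 3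
      - μ * y / (Real.sqrt ((x + μ - 1) ^ 2 + y ^ 2)) ^ 3
      - 3 / 2 * μ * A₂ * y / (Real.sqrt ((x + μ - 1) ^ 2 + y ^ 2)) ^ 5 = 0 := by
  have hcube : δbar ^ 3 = q₁ / n ^ 2 := by
    rw [hδbar, ← Real.rpow_natCast, ← Real.rpow_mul (by positivity)]
    norm_num
  have hq : q₁ = n ^ 2 * δbar ^ 3 := by
    rw [hcube]
    field_simp
  have h1 : Real.sqrt ((x + μ) ^ 2 + y ^ 2) = δbar := by
    rw [show (x + μ) ^ 2 + y ^ 2 = δbar ^ 2 by rw [hy, hx]; ring]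
    exact Real.sqrt_sq hδ0.le
  have h2 : Real.sqrt ((x + μ - 1) ^ 2 + y ^ 2) = 1 := by
    rw [show (x + μ - 1) ^ 2 + y ^ 2 = 1 by rw [hy, hx]; ring]
    exact Real.sqrt_one
  have hterm : ∀ z : ℝ, (1 - μ) * q₁ * z / δbar ^ 3 = (1 - μ) * n ^ 2 * z := by
    intro z
    rw [hq]
    field_simp
  refine ⟨h1, h2, ?_, ?_⟩
  · rw [h1, h2, hterm]
    linear_combination μ * (x + μ - 1) * hn2
  · rw [h1, h2, hterm]
    linear_combination μ * y * hn2
end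

section
/- Let μ ∈ (0,1), q₁ > 0 with δ := q₁^{1/3} < 2, and let x₀ = δ²/2 − μ and y₀ ∈ ℝ be any number with y₀² = δ² − δ⁴/4. Then r₁ := √((x₀+μ)² + y₀²) = δ, r₂ := √((x₀+μ−1)² + y₀²) = 1, and (x₀,y₀) satisfies the photogravitational equilibrium equations x₀ − (1−μ)q₁(x₀+μ)/r₁³ − μ(x₀+μ−1)/r₂³ = 0 and y₀ − (1−μ)q₁y₀/r₁³ − μy₀/r₂³ = 0; i.e. (x₀,y₀) is a triangular equilibrium point of the photogravitational restricted three-body problem (the case A₂ = 0, W₁ = 0, n = 1). -/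
/-!
Substituting `x₀ + μ = δ² / 2` and `y₀² = δ² - δ⁴ / 4` gives `r₁² = δ²` and `r₂² = 1`, and `δ > 0`
fixes the sign of the root. Since `r₁³ = δ³ = q₁`, the two attraction coefficients
`(1 - μ) q₁ / r₁³` and `μ / r₂³` are `1 - μ` and `μ`; they sum to `1`, and both equilibrium
equations become linear identities.
-/

/-- (x₀, y₀) with x₀ = δ²/2 − μ and y₀² = δ² − δ⁴/4, where δ = q₁^{1/3}, is a
triangular equilibrium point of the photogravitational restricted three-body problem
(the case A₂ = 0, W₁ = 0, n = 1): r₁ = δ, r₂ = 1 and both equilibrium equations hold. -/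
theorem stmt_8 (μ q₁ : ℝ) (hμ : μ ∈ Set.Ioo (0 : ℝ) 1) (hq₁ : q₁ > 0)
    (δ : ℝ) (hδ : δ = q₁ ^ ((1 : ℝ) / 3)) (hδ2 : δ < 2)
    (x₀ y₀ : ℝ) (hx₀ : x₀ = δ ^ 2 / 2 - μ) (hy₀ : y₀ ^ 2 = δ ^ 2 - δ ^ 4 / 4) :
    Real.sqrt ((x₀ + μ) ^ 2 + y₀ ^ 2) = δ ∧
    Real.sqrt ((x₀ + μ - 1) ^ 2 + y₀ ^ 2) = 1 ∧
    x₀ - (1 - μ) * q₁ * (x₀ + μ) / (Real.sqrt ((x₀ + μ) ^ 2 + y₀ ^ 2)) ^ 3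
      - μ * (x₀ + μ - 1) / (Real.sqrt ((x₀ + μ - 1) ^ 2 + y₀ ^ 2)) ^ 3 = 0 ∧
    y₀ - (1 - μ) * q₁ * y₀ / (Real.sqrt ((x₀ + μ) ^ 2 + y₀ ^ 2)) ^ 3
      - μ * y₀ / (Real.sqrt ((x₀ + μ - 1) ^ 2 + y₀ ^ 2)) ^ 3 = 0 := by
  have hpos : 0 < δ := hδ ▸ Real.rpow_pos_of_pos hq₁ _
  have hcube : δ ^ 3 = q₁ := by
    rw [hδ, ← Real.rpow_natCast, ← Real.rpow_mul hq₁.le]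
    norm_num
  have h1 : Real.sqrt ((x₀ + μ) ^ 2 + y₀ ^ 2) = δ := by
    rw [show (x₀ + μ) ^ 2 + y₀ ^ 2 = δ ^ 2 by rw [hy₀, hx₀]; ring]
    exact Real.sqrt_sq hpos.le
  have h2 : Real.sqrt ((x₀ + μ - 1) ^ 2 + y₀ ^ 2) = 1 := by
    rw [show (x₀ + μ - 1) ^ 2 + y₀ ^ 2 = 1 by rw [hy₀, hx₀]; ring]
    exact Real.sqrt_one
  -- With r₁³ = q₁ and r₂ = 1 the force coefficients are 1 - μ and μ, so both equations are linear.
  refine ⟨h1, h2, ?_, ?_⟩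
  · rw [h1, h2, hcube]
    field_simp
    ring
  · rw [h1, h2, hcube]
    field_simp
    ring
end

section
/- Let μ ∈ (0,1), q₁, A₂ ∈ ℝ, n > 0 with n² = 1 + (3/2)A₂, and W₁ = 0. Suppose (x,y) ∈ ℝ² with y ≠ 0, r₁ := √((x+μ)² + y²) > 0 and r₂ := √((x+μ−1)² + y²) > 0 satisfies the drag-free equilibrium equations (E1) n²x − (1−μ)q₁(x+μ)/r₁³ − μ(x+μ−1)/r₂³ − (3/2)μA₂(x+μ−1)/r₂⁵ = 0 and (E2) n²y − (1−μ)q₁y/r₁³ − μy/r₂³ − (3/2)μA₂y/r₂⁵ = 0. Then r₂ satisfies n²r₂⁵ = r₂² + (3/2)A₂, and r₁ satisfies (1−μ)q₁/r₁³ = n² − μ/r₂³ − (3/2)μA₂/r₂⁵. -/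
/-- At a drag-free triangular equilibrium point (y ≠ 0) of the generalized
photogravitational problem, r₂ satisfies n²r₂⁵ = r₂² + (3/2)A₂ and r₁ satisfies
(1−μ)q₁/r₁³ = n² − μ/r₂³ − (3/2)μA₂/r₂⁵. -/
theorem stmt_10 (μ q₁ A₂ n : ℝ) (hμ : μ ∈ Set.Ioo (0 : ℝ) 1)
    (hn : n > 0) (hn2 : n ^ 2 = 1 + 3 / 2 * A₂)
    (W₁ : ℝ) (hW₁ : W₁ = 0)
    (x y : ℝ) (hy : y ≠ 0)
    (r₁ r₂ : ℝ)
    (hr₁def : r₁ = Real.sqrt ((x + μ) ^ 2 + y ^ 2))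
    (hr₂def : r₂ = Real.sqrt ((x + μ - 1) ^ 2 + y ^ 2))
    (hr₁ : r₁ > 0) (hr₂ : r₂ > 0)
    (hE1 : n ^ 2 * x - (1 - μ) * q₁ * (x + μ) / r₁ ^ 3
      - μ * (x + μ - 1) / r₂ ^ 3
      - 3 / 2 * μ * A₂ * (x + μ - 1) / r₂ ^ 5 = 0)
    (hE2 : n ^ 2 * y - (1 - μ) * q₁ * y / r₁ ^ 3
      - μ * y / r₂ ^ 3
      - 3 / 2 * μ * A₂ * y / r₂ ^ 5 = 0) :
    n ^ 2 * r₂ ^ 5 = r₂ ^ 2 + 3 / 2 * A₂ ∧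
    (1 - μ) * q₁ / r₁ ^ 3 = n ^ 2 - μ / r₂ ^ 3 - 3 / 2 * μ * A₂ / r₂ ^ 5 := by
  have hμ0 : μ ≠ 0 := ne_of_gt hμ.1
  -- Dividing (E2) by `y` gives the equation for `r₁`.
  have h₁ : (1 - μ) * q₁ / r₁ ^ 3 = n ^ 2 - μ / r₂ ^ 3 - 3 / 2 * μ * A₂ / r₂ ^ 5 := by
    apply mul_right_cancel₀ hy
    linear_combination -hE2
  refine ⟨?_, h₁⟩
  -- Substituting this into (E1), the terms in `x` cancel and a multiple of `μ` is left.
  have h₂ : n ^ 2 = 1 / r₂ ^ 3 + 3 / 2 * A₂ / r₂ ^ 5 := by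
    apply mul_left_cancel₀ hμ0
    linear_combination -hE1 - (x + μ) * h₁
  have h₃ : (1 / r₂ ^ 3 + 3 / 2 * A₂ / r₂ ^ 5) * r₂ ^ 5 = r₂ ^ 2 + 3 / 2 * A₂ := by
    field_simp
  rw [h₂, h₃]
end

section
/- Let μ ∈ (0,1), q₁ > 0, and suppose (x,y) ∈ ℝ² with y ≠ 0, r₁ := √((x+μ)² + y²) > 0 and r₂ := √((x+μ−1)² + y²) > 0 satisfies the photogravitational equilibrium equations x − (1−μ)q₁(x+μ)/r₁³ − μ(x+μ−1)/r₂³ = 0 and y − (1−μ)q₁y/r₁³ − μy/r₂³ = 0 (the case A₂ = 0, W₁ = 0, n = 1). Then r₂ = 1 and r₁ = q₁^{1/3}, and consequently x = q₁^{2/3}/2 − μ and y² = q₁^{2/3} − q₁^{4/3}/4. -/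
/-!
Put `a = q₁ / r₁³` and `b = 1 / r₂³`. Since `y ≠ 0`, the second equation says
`(1 - μ) a + μ b = 1`; substituting this in the first leaves `μ b = μ`. Hence `b = 1`
and `a = 1`, i.e. `r₂ = 1` and `q₁ = r₁³`. The coordinates follow by intersecting the
circles of radii `r₁` and `1` about the two primaries.
-/

/-- At a triangular equilibrium point (y ≠ 0) of the photogravitational restricted
three-body problem (A₂ = 0, W₁ = 0, n = 1), one has r₂ = 1 and r₁ = q₁^{1/3}, hence
x = q₁^{2/3}/2 − μ and y² = q₁^{2/3} − q₁^{4/3}/4. -/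
theorem stmt_11 (μ q₁ : ℝ) (hμ : μ ∈ Set.Ioo (0 : ℝ) 1) (hq₁ : q₁ > 0)
    (x y : ℝ) (hy : y ≠ 0)
    (r₁ r₂ : ℝ)
    (hr₁def : r₁ = Real.sqrt ((x + μ) ^ 2 + y ^ 2))
    (hr₂def : r₂ = Real.sqrt ((x + μ - 1) ^ 2 + y ^ 2))
    (hr₁ : r₁ > 0) (hr₂ : r₂ > 0)
    (hE1 : x - (1 - μ) * q₁ * (x + μ) / r₁ ^ 3
      - μ * (x + μ - 1) / r₂ ^ 3 = 0)
    (hE2 : y - (1 - μ) * q₁ * y / r₁ ^ 3 - μ * y / r₂ ^ 3 = 0) :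
    r₂ = 1 ∧ r₁ = q₁ ^ ((1 : ℝ) / 3) ∧
    x = q₁ ^ ((2 : ℝ) / 3) / 2 - μ ∧
    y ^ 2 = q₁ ^ ((2 : ℝ) / 3) - q₁ ^ ((4 : ℝ) / 3) / 4 := by
  obtain ⟨hμ0, hμ1⟩ := hμ
  have h1sq : r₁ ^ 2 = (x + μ) ^ 2 + y ^ 2 := by
    rw [hr₁def, Real.sq_sqrt (by positivity)]
  have h2sq : r₂ ^ 2 = (x + μ - 1) ^ 2 + y ^ 2 := by
    rw [hr₂def, Real.sq_sqrt (by positivity)]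
  have hsum : (1 - μ) * (q₁ / r₁ ^ 3) + μ * (1 / r₂ ^ 3) = 1 := by
    apply mul_left_cancel₀ hy
    linear_combination -hE2
  have hb : 1 / r₂ ^ 3 = 1 := by
    apply mul_left_cancel₀ hμ0.ne'
    linear_combination hE1 + (x + μ) * hsum
  have ha : q₁ / r₁ ^ 3 = 1 := by
    apply mul_left_cancel₀ (sub_pos.mpr hμ1).ne'
    linear_combination hsum - μ * hb
  have hr₂1 : r₂ = 1 := by
    rw [one_div, inv_eq_one] at hb
    exact (pow_eq_one_iff_of_nonneg hr₂.le (by norm_num)).mp hb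
  have hq : q₁ = r₁ ^ 3 := by
    rwa [div_eq_one_iff_eq (by positivity)] at ha
  have hp1 : q₁ ^ ((1 : ℝ) / 3) = r₁ := by
    rw [hq, ← Real.rpow_natCast, ← Real.rpow_mul hr₁.le]
    norm_num
  have hp2 : q₁ ^ ((2 : ℝ) / 3) = r₁ ^ 2 := by
    rw [hq, ← Real.rpow_natCast, ← Real.rpow_natCast, ← Real.rpow_mul hr₁.le]
    norm_num
  have hp4 : q₁ ^ ((4 : ℝ) / 3) = r₁ ^ 4 := by
    rw [hq, ← Real.rpow_natCast, ← Real.rpow_natCast, ← Real.rpow_mul hr₁.le]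
    norm_num
  rw [hr₂1] at h2sq
  -- Subtracting the equations of the two circles.
  have hx : x = r₁ ^ 2 / 2 - μ := by linear_combination (h2sq - h1sq) / 2
  rw [hp1, hp2, hp4]
  refine ⟨hr₂1, rfl, hx, ?_⟩
  have hxμ : x + μ = r₁ ^ 2 / 2 := by linear_combination hx
  rw [hxμ] at h1sq
  linear_combination -h1sq
end
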